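/- arXiv:1903.05270 — 2 statements merged into one kernel-verified Lean document; each statement's English description precedes it below -/
import Mathlib

section
/- For real x > 1/2, (π/2) ∫_{-∞}^{∞} sech²(πw) log(x + iw - 1/2) dw = ψ(x), where the left side is real (the imaginary parts cancel by symmetry). -/
open MeasureTheory Real

/-!
The weight `(π / 2) sech² (π w)` is the derivative of `sigmoid (2 π w)`, hence the density of a
random variable `W` following a logistic distribution. Substituting `u = sigmoid (2 π w)` turns
its Laplace transform into a beta integral, and the reflection formula gives
`E[exp (-s W)] = (s / 2) / sin (s / 2)`. Put `L z = E[log (z + i W)]`. By Frullani's integral,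
`L (z + 1) - L z = ∫₀^∞ exp (-t z) (1 - exp (-t)) / t * E[exp (-i t W)] dt`, and since
`E[exp (-i t W)] = (t / 2) / sinh (t / 2)` the integrand collapses to `exp (-t (z + 1 / 2))`. So
`y ↦ L y` and `y ↦ ψ (y + 1 / 2)` satisfy the same difference equation. Both are `log y + o(1)`
as `y → ∞` (for `ψ`, by convexity of `log Γ`), so their difference is `1`-periodic with limit `0`
and therefore vanishes.
-/

open Filter Set Topology

lemma eq_of_tendsto_atTop_of_add_eq {E : Type*} [TopologicalSpace E] [T2Space E] {f : ℝ → E}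
    {l : E} {a T : ℝ} (hT : 0 < T) (hf : ∀ x > a, f (x + T) = f x)
    (hl : Tendsto f atTop (𝓝 l)) {x : ℝ} (hx : a < x) : f x = l := by
  have hconst (n : ℕ) : f (x + n * T) = f x := by
    induction n with
    | zero => simp
    | succ n ih =>
      have hxn : a < x + n * T := by linarith [show 0 ≤ n * T by positivity]
      rw [← ih, ← hf _ hxn]
      congr 1
      push_cast
      ring
  have hseq : Tendsto (fun n : ℕ ↦ x + n * T) atTop atTop :=
    tendsto_atTop_add_const_left _ _ (tendsto_natCast_atTop_atTop.atTop_mul_const hT)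
  refine tendsto_nhds_unique ?_ (hl.comp hseq)
  simp only [Function.comp_def, hconst, tendsto_const_nhds]

/-! ### The digamma function -/

lemma hasDerivAt_log_Gamma {x : ℝ} (hx : ∀ m : ℕ, x ≠ -m) :
    HasDerivAt (fun y ↦ Real.log (Real.Gamma y)) (deriv Real.Gamma x / Real.Gamma x) x :=
  (Real.differentiableAt_Gamma hx).hasDerivAt.log (Real.Gamma_ne_zero hx)

lemma digamma_ofReal {x : ℝ} (hx : ∀ m : ℕ, x ≠ -m) :
    Complex.digamma x = (deriv (fun y ↦ Real.log (Real.Gamma y)) x : ℝ) := by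
  have hcomplex : HasDerivAt (fun y : ℝ ↦ Complex.Gamma y) (deriv Complex.Gamma x) x :=
    (Complex.differentiableAt_Gamma x fun m ↦ mod_cast hx m).hasDerivAt.comp_ofReal
  have hreal : HasDerivAt (fun y : ℝ ↦ Complex.Gamma y) (deriv Real.Gamma x : ℝ) x := by
    simpa only [Complex.Gamma_ofReal] using (Real.differentiableAt_Gamma hx).hasDerivAt.ofReal_comp
  rw [Complex.digamma_def, logDeriv_apply, hcomplex.unique hreal, Complex.Gamma_ofReal,
    (hasDerivAt_log_Gamma hx).deriv, Complex.ofReal_div]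

lemma ne_neg_natCast_of_pos {x : ℝ} (hx : 0 < x) (m : ℕ) : x ≠ -m :=
  (hx.trans_le' (neg_nonpos.2 m.cast_nonneg)).ne'

lemma slope_log_Gamma_add_one {x : ℝ} (hx : 0 < x) :
    slope (Real.log ∘ Real.Gamma) x (x + 1) = Real.log x := by
  rw [slope_def_field, Function.comp_apply, Function.comp_apply, Real.Gamma_add_one hx.ne',
    Real.log_mul hx.ne' (Real.Gamma_pos_of_pos hx).ne', add_sub_cancel_right,
    add_sub_cancel_left, div_one]

lemma deriv_log_Gamma_le_log {x : ℝ} (hx : 0 < x) :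
    deriv (fun y ↦ Real.log (Real.Gamma y)) x ≤ Real.log x := by
  rw [← slope_log_Gamma_add_one hx]
  exact Real.convexOn_log_Gamma.deriv_le_slope hx (add_pos hx one_pos) (lt_add_one x)
    (hasDerivAt_log_Gamma (ne_neg_natCast_of_pos hx)).differentiableAt

lemma log_le_deriv_log_Gamma_add_one {x : ℝ} (hx : 0 < x) :
    Real.log x ≤ deriv (fun y ↦ Real.log (Real.Gamma y)) (x + 1) := by
  have hx' : 0 < x + 1 := add_pos hx one_pos
  rw [← slope_log_Gamma_add_one hx]
  exact Real.convexOn_log_Gamma.slope_le_deriv hx hx' (lt_add_one x)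
    (hasDerivAt_log_Gamma (ne_neg_natCast_of_pos hx')).differentiableAt

lemma tendsto_deriv_log_Gamma_sub_log :
    Tendsto (fun x ↦ deriv (fun y ↦ Real.log (Real.Gamma y)) x - Real.log x) atTop (𝓝 0) := by
  refine tendsto_of_tendsto_of_tendsto_of_le_of_le' (Real.tendsto_log_comp_add_sub_log (-1))
    tendsto_const_nhds ?_ ?_
  · filter_upwards [eventually_gt_atTop 1] with x hx
    have h := log_le_deriv_log_Gamma_add_one (sub_pos.2 hx)
    rw [sub_add_cancel] at h
    exact sub_le_sub_right h _
  · filter_upwards [eventually_gt_atTop 0] with x hx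
    exact sub_nonpos.2 (deriv_log_Gamma_le_log hx)

lemma tendsto_digamma_sub_log :
    Tendsto (fun x : ℝ ↦ Complex.digamma x - Real.log x) atTop (𝓝 0) := by
  refine ((Complex.continuous_ofReal.tendsto' 0 0 Complex.ofReal_zero).comp
    tendsto_deriv_log_Gamma_sub_log).congr' ?_
  filter_upwards [eventually_gt_atTop 0] with x hx
  simp [digamma_ofReal (ne_neg_natCast_of_pos hx)]

/-! ### Exponentials and logarithms on a right half-plane -/

lemma norm_log_sub_log_le {m : ℝ} (hm : 0 < m) {z w : ℂ} (hz : m ≤ z.re) (hw : m ≤ w.re) :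
    ‖Complex.log w - Complex.log z‖ ≤ ‖w - z‖ / m := by
  rw [div_eq_inv_mul]
  refine (convex_halfSpace_re_ge m).norm_image_sub_le_of_norm_hasDerivWithin_le
    (fun ζ hζ ↦ (Complex.hasDerivAt_log (.inl (hm.trans_le hζ))).hasDerivWithinAt)
    (fun ζ hζ ↦ ?_) hz hw
  rw [norm_inv]
  exact inv_anti₀ hm (le_trans hζ (Complex.re_le_norm ζ))

lemma norm_exp_neg_mul_sub_exp_neg_mul_le {t m : ℝ} (ht : 0 ≤ t) {z w : ℂ} (hz : m ≤ z.re)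
    (hw : m ≤ w.re) :
    ‖Complex.exp (-(t * z)) - Complex.exp (-(t * w))‖ ≤ t * Real.exp (-(t * m)) * ‖z - w‖ := by
  refine (convex_halfSpace_re_ge m).norm_image_sub_le_of_norm_hasDerivWithin_le
    (f := fun ζ ↦ Complex.exp (-(t * ζ))) (f' := fun ζ ↦ Complex.exp (-(t * ζ)) * -(t * 1))
    (fun ζ _ ↦ ((hasDerivAt_id ζ).const_mul (t : ℂ)).neg.cexp.hasDerivWithinAt)
    (fun ζ hζ ↦ ?_) hw hz
  have hζ' : m ≤ ζ.re := hζ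
  rw [mul_one, norm_mul, norm_neg, Complex.norm_real, Real.norm_of_nonneg ht, Complex.norm_exp,
    mul_comm, Complex.neg_re, Complex.re_ofReal_mul]
  gcongr

lemma integral_exp_neg_mul_Ioi {z : ℂ} (hz : 0 < z.re) :
    ∫ t in Ioi (0 : ℝ), Complex.exp (-(t * z)) = z⁻¹ := by
  simpa [mul_comm, neg_div_neg_eq] using
    integral_exp_mul_complex_Ioi (a := -z) (by simpa using hz) 0

lemma min_re_le_re_add_smul_sub (z w : ℂ) {s : ℝ} (hs : s ∈ Icc (0 : ℝ) 1) :
    min z.re w.re ≤ (z + s • (w - z)).re :=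
  (convex_halfSpace_re_ge (min z.re w.re)).add_smul_sub_mem
    (min_le_left z.re w.re) (min_le_right z.re w.re) hs

lemma re_add_smul_sub_pos {z w : ℂ} (hz : 0 < z.re) (hw : 0 < w.re) {s : ℝ}
    (hs : s ∈ Icc (0 : ℝ) 1) : 0 < (z + s • (w - z)).re :=
  (lt_min hz hw).trans_le (min_re_le_re_add_smul_sub z w hs)

lemma hasDerivAt_add_smul_sub (z w : ℂ) (s : ℝ) :
    HasDerivAt (fun s : ℝ ↦ z + s • (w - z)) (w - z) s := by
  simpa using ((hasDerivAt_id s).smul_const (w - z)).const_add z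

lemma integral_sub_mul_inv_segment {z w : ℂ} (hz : 0 < z.re) (hw : 0 < w.re) :
    ∫ s in (0 : ℝ)..1, (w - z) * (z + s • (w - z))⁻¹ = Complex.log w - Complex.log z := by
  have hpos (s : ℝ) (hs : s ∈ uIcc (0 : ℝ) 1) : 0 < (z + s • (w - z)).re :=
    re_add_smul_sub_pos hz hw (uIcc_of_le (zero_le_one' ℝ) ▸ hs)
  have hderiv (s : ℝ) (hs : s ∈ uIcc (0 : ℝ) 1) :
      HasDerivAt (fun s : ℝ ↦ Complex.log (z + s • (w - z))) ((w - z) * (z + s • (w - z))⁻¹) s := by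
    simpa only [div_eq_mul_inv] using
      (hasDerivAt_add_smul_sub z w s).clog_real (.inl (hpos s hs))
  have hcont : ContinuousOn (fun s : ℝ ↦ (w - z) * (z + s • (w - z))⁻¹) (uIcc 0 1) :=
    continuousOn_const.mul <| ContinuousOn.inv₀ (by fun_prop) fun s hs h ↦
      (hpos s hs).ne' (by rw [h, Complex.zero_re])
  rw [intervalIntegral.integral_eq_sub_of_hasDerivAt hderiv hcont.intervalIntegrable]
  simp

lemma integral_sub_mul_exp_segment (z w : ℂ) {t : ℝ} (ht : t ≠ 0) :
    ∫ s in (0 : ℝ)..1, (w - z) * Complex.exp (-(t * (z + s • (w - z)))) =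
      (Complex.exp (-(t * z)) - Complex.exp (-(t * w))) / t := by
  have ht' : (t : ℂ) ≠ 0 := mod_cast ht
  have hderiv (s : ℝ) (_ : s ∈ uIcc (0 : ℝ) 1) :
      HasDerivAt (fun s : ℝ ↦ -Complex.exp (-(t * (z + s • (w - z)))) / t)
        ((w - z) * Complex.exp (-(t * (z + s • (w - z))))) s := by
    refine (((hasDerivAt_add_smul_sub z w s).const_mul (t : ℂ)).neg.cexp.neg.div_const
      (t : ℂ)).congr_deriv ?_
    rw [Pi.neg_apply]
    field_simp
  rw [intervalIntegral.integral_eq_sub_of_hasDerivAt hderiv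
    (Continuous.intervalIntegrable (by fun_prop) _ _)]
  simp only [one_smul, zero_smul, add_zero, add_sub_cancel]
  ring

lemma integrable_sub_mul_exp_segment {z w : ℂ} (hz : 0 < z.re) (hw : 0 < w.re) :
    Integrable (fun p : ℝ × ℝ ↦ (w - z) * Complex.exp (-(p.2 * (z + p.1 • (w - z)))))
      ((volume.restrict (Ioc 0 1)).prod (volume.restrict (Ioi 0))) := by
  set m := min z.re w.re
  have hm : 0 < m := lt_min hz hw
  have hdom : Integrable (fun p : ℝ × ℝ ↦ ‖w - z‖ * Real.exp (-m * p.2))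
      ((volume.restrict (Ioc (0 : ℝ) 1)).prod (volume.restrict (Ioi 0))) :=
    (integrable_const ‖w - z‖).mul_prod (integrableOn_exp_mul_Ioi (neg_neg_of_pos hm) 0)
  refine hdom.mono' (by fun_prop) ?_
  rw [Measure.prod_restrict]
  filter_upwards [ae_restrict_mem (measurableSet_Ioc.prod measurableSet_Ioi)] with ⟨s, t⟩ hst
  have hre : m ≤ (z + s • (w - z)).re :=
    min_re_le_re_add_smul_sub z w (Ioc_subset_Icc_self hst.1)
  have ht : 0 ≤ t := (mem_Ioi.1 hst.2).le
  rw [norm_mul, Complex.norm_exp, Complex.neg_re, Complex.re_ofReal_mul, neg_mul, mul_comm m]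
  gcongr

/-- A case of Frullani's integral; `Frullani.integral_Ioi_eq` only covers real `z` and `w`. -/
lemma integral_exp_neg_mul_sub_exp_neg_mul_div {z w : ℂ} (hz : 0 < z.re) (hw : 0 < w.re) :
    ∫ t in Ioi (0 : ℝ), (Complex.exp (-(t * z)) - Complex.exp (-(t * w))) / t =
      Complex.log w - Complex.log z := by
  calc ∫ t in Ioi (0 : ℝ), (Complex.exp (-(t * z)) - Complex.exp (-(t * w))) / t
    _ = ∫ t in Ioi (0 : ℝ), ∫ s in Ioc (0 : ℝ) 1,
          (w - z) * Complex.exp (-(t * (z + s • (w - z)))) :=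
        setIntegral_congr_fun measurableSet_Ioi fun t ht ↦ by
          rw [← integral_sub_mul_exp_segment z w (mem_Ioi.1 ht).ne',
            intervalIntegral.integral_of_le zero_le_one]
    _ = ∫ s in Ioc (0 : ℝ) 1, ∫ t in Ioi (0 : ℝ),
          (w - z) * Complex.exp (-(t * (z + s • (w - z)))) :=
        (integral_integral_swap (integrable_sub_mul_exp_segment hz hw)).symm
    _ = ∫ s in Ioc (0 : ℝ) 1, (w - z) * (z + s • (w - z))⁻¹ :=
        setIntegral_congr_fun measurableSet_Ioc fun s hs ↦ by
          rw [integral_const_mul,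
            integral_exp_neg_mul_Ioi (re_add_smul_sub_pos hz hw (Ioc_subset_Icc_self hs))]
    _ = Complex.log w - Complex.log z := by
        rw [← integral_sub_mul_inv_segment hz hw, intervalIntegral.integral_of_le zero_le_one]

/-! ### The logistic distribution -/

/-- The density of the centred logistic distribution of scale `1 / (2 * π)`, whose cumulative
distribution function is `w ↦ Real.sigmoid (2 * π * w)`. -/
noncomputable def logisticDensity (w : ℝ) : ℝ := π / 2 * (1 / Real.cosh (π * w)) ^ 2

lemma logisticDensity_nonneg (w : ℝ) : 0 ≤ logisticDensity w := by
  unfold logisticDensity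
  positivity

lemma continuous_logisticDensity : Continuous logisticDensity := by
  unfold logisticDensity
  exact continuous_const.mul
    ((continuous_const.div (by fun_prop) fun w ↦ (Real.cosh_pos _).ne').pow 2)

lemma hasDerivAt_sigmoid_two_pi_mul (w : ℝ) :
    HasDerivAt (fun w ↦ Real.sigmoid (2 * π * w)) (logisticDensity w) w := by
  have h : HasDerivAt (fun w : ℝ ↦ 2 * π * w) (2 * π) w := by
    simpa using (hasDerivAt_id w).const_mul (2 * π)
  refine ((Real.hasDerivAt_sigmoid (2 * π * w)).comp w h).congr_deriv ?_
  rw [← Real.sigmoid_neg, Real.sigmoid_def, Real.sigmoid_def, logisticDensity, Real.cosh_eq,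
    neg_neg, show 2 * π * w = π * w + π * w by ring, neg_add, Real.exp_add, Real.exp_add,
    Real.exp_neg]
  field_simp
  ring

lemma one_add_sq_div_two_le_cosh (x : ℝ) : 1 + x ^ 2 / 2 ≤ Real.cosh x := by
  have hcosh : Real.cosh x = 1 + 2 * Real.sinh (x / 2) ^ 2 := by
    rw [← mul_div_cancel₀ x (two_ne_zero' ℝ), mul_div_assoc, Real.cosh_two_mul, Real.cosh_sq]
    ring_nf
  have hsinh : (x / 2) ^ 2 ≤ Real.sinh (x / 2) ^ 2 := by
    rw [sq_le_sq, Real.abs_sinh]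
    exact Real.self_le_sinh_iff.2 (abs_nonneg _)
  linarith

lemma one_add_sq_mul_logisticDensity_le (w : ℝ) :
    (1 + w ^ 2) * logisticDensity w ≤ π / 2 * (1 + w ^ 2)⁻¹ := by
  have hcosh : 1 + w ^ 2 ≤ Real.cosh (π * w) := by
    refine le_trans ?_ (one_add_sq_div_two_le_cosh (π * w))
    nlinarith [mul_nonneg (sq_nonneg w) (show 0 ≤ π ^ 2 - 2 by nlinarith [Real.pi_gt_three])]
  calc (1 + w ^ 2) * logisticDensity w
    _ ≤ (1 + w ^ 2) * (π / 2 * (1 / (1 + w ^ 2)) ^ 2) := by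
        unfold logisticDensity
        gcongr
    _ = π / 2 * (1 + w ^ 2)⁻¹ := by field_simp

lemma integrable_logisticDensity_smul {E : Type*} [NormedAddCommGroup E] [NormedSpace ℝ E]
    {f : ℝ → E} {C : ℝ} (hf : AEStronglyMeasurable f) (hC : ∀ w, ‖f w‖ ≤ C * (1 + w ^ 2)) :
    Integrable fun w ↦ logisticDensity w • f w := by
  have hdom : Integrable fun w ↦ (1 + w ^ 2) * logisticDensity w := by
    refine (integrable_inv_one_add_sq.const_mul (π / 2)).mono' ?_ (.of_forall fun w ↦ ?_)
    · exact (Continuous.mul (by fun_prop) continuous_logisticDensity).aestronglyMeasurable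
    · rw [Real.norm_of_nonneg (mul_nonneg (by positivity) (logisticDensity_nonneg w))]
      exact one_add_sq_mul_logisticDensity_le w
  refine (hdom.const_mul C).mono' (continuous_logisticDensity.aestronglyMeasurable.smul hf)
    (.of_forall fun w ↦ ?_)
  rw [norm_smul, Real.norm_of_nonneg (logisticDensity_nonneg w), ← mul_assoc, mul_comm]
  exact mul_le_mul_of_nonneg_right (hC w) (logisticDensity_nonneg w)

lemma integrable_logisticDensity : Integrable logisticDensity := by
  simpa using integrable_logisticDensity_smul (f := fun _ ↦ (1 : ℝ)) (C := 1)
    aestronglyMeasurable_const fun w ↦ by simpa using sq_nonneg w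

lemma abs_le_one_add_sq (w : ℝ) : |w| ≤ 1 + w ^ 2 := by
  nlinarith [sq_abs w, sq_nonneg (|w| - 1), abs_nonneg w]

lemma integrable_logisticDensity_mul_abs : Integrable fun w ↦ logisticDensity w * |w| :=
  integrable_logisticDensity_smul (C := 1) continuous_abs.aestronglyMeasurable fun w ↦ by
    simpa using abs_le_one_add_sq w

/-! ### The Laplace transform of the logistic distribution -/

lemma range_sigmoid_mul {c : ℝ} (hc : c ≠ 0) :
    range (fun w ↦ Real.sigmoid (c * w)) = Ioo 0 1 := by
  rw [← Real.range_sigmoid]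
  exact (mul_left_surjective₀ hc).range_comp Real.sigmoid

lemma sigmoid_cpow_mul_sigmoid_neg_cpow (a b : ℂ) (u : ℝ) :
    (Real.sigmoid u : ℂ) ^ a * (Real.sigmoid (-u) : ℂ) ^ b =
      (Real.sigmoid u : ℂ) ^ (a + b) * Complex.exp (-(b * u)) := by
  have hσ := Real.sigmoid_pos u
  have hexp : (Real.exp (-u) : ℂ) ^ b = Complex.exp (-(b * u)) := by
    rw [Complex.cpow_def_of_ne_zero (mod_cast (Real.exp_pos (-u)).ne'),
      ← Complex.ofReal_log (Real.exp_pos _).le, Real.log_exp, Complex.ofReal_neg, neg_mul, mul_comm]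
  rw [← Real.sigmoid_mul_rexp_neg, Complex.ofReal_mul,
    Complex.mul_cpow_ofReal_nonneg hσ.le (Real.exp_pos _).le, ← mul_assoc,
    ← Complex.cpow_add _ _ (mod_cast hσ.ne'), hexp]

/-- The substitution `u = sigmoid (2 * π * w)` turns the Laplace transform into Euler's beta
integral. -/
lemma integral_logisticDensity_smul_exp_eq_betaIntegral (a : ℂ) :
    ∫ w : ℝ, logisticDensity w • Complex.exp (-(a * (2 * π * w))) =
      Complex.betaIntegral (1 - a) (1 + a) := by
  have hinj : InjOn (fun w ↦ Real.sigmoid (2 * π * w)) univ :=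
    (Real.sigmoid_injective.comp (mul_right_injective₀ two_pi_pos.ne')).injOn
  rw [Complex.betaIntegral, intervalIntegral.integral_of_le zero_le_one,
    integral_Ioc_eq_integral_Ioo, ← range_sigmoid_mul two_pi_pos.ne', ← image_univ,
    integral_image_eq_integral_abs_deriv_smul MeasurableSet.univ
      (fun w _ ↦ (hasDerivAt_sigmoid_two_pi_mul w).hasDerivWithinAt) hinj, setIntegral_univ]
  refine integral_congr_ae (.of_forall fun w ↦ ?_)
  have h := sigmoid_cpow_mul_sigmoid_neg_cpow (-a) a (2 * π * w)
  rw [neg_add_cancel, Complex.cpow_zero, one_mul, Real.sigmoid_neg] at h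
  push_cast at h
  simp only [abs_of_nonneg (logisticDensity_nonneg w), sub_sub_cancel_left, add_sub_cancel_left, h]

lemma integral_logisticDensity : ∫ w, logisticDensity w = 1 := by
  have h := integral_logisticDensity_smul_exp_eq_betaIntegral 0
  rw [sub_zero, add_zero, Complex.betaIntegral_eval_one_right (by simp)] at h
  have hofReal : ((∫ w, logisticDensity w : ℝ) : ℂ) = 1 := by
    simpa [← integral_complex_ofReal] using h
  exact_mod_cast hofReal

lemma betaIntegral_one_sub_one_add {a : ℂ} (ha₀ : a ≠ 0) (ha : |a.re| < 1) :
    Complex.betaIntegral (1 - a) (1 + a) = π * a / Complex.sin (π * a) := by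
  obtain ⟨hlower, hupper⟩ := abs_lt.1 ha
  have hGamma_two : Complex.Gamma 2 = 1 := by simp
  have h := Complex.Gamma_mul_Gamma_eq_betaIntegral (s := 1 - a) (t := 1 + a)
    (by simpa using hupper) (by simp only [Complex.add_re, Complex.one_re]; linarith)
  rw [sub_add_add_cancel, one_add_one_eq_two, hGamma_two, one_mul] at h
  calc Complex.betaIntegral (1 - a) (1 + a)
    _ = Complex.Gamma (1 - a) * Complex.Gamma (a + 1) := by rw [← h, add_comm a]
    _ = a * (Complex.Gamma a * Complex.Gamma (1 - a)) := by
        rw [Complex.Gamma_add_one a ha₀]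
        ring
    _ = π * a / Complex.sin (π * a) := by
        rw [Complex.Gamma_mul_Gamma_one_sub]
        ring

lemma integral_logisticDensity_smul_exp {s : ℂ} (hs₀ : s ≠ 0) (hs : |s.re| < 2 * π) :
    ∫ w : ℝ, logisticDensity w • Complex.exp (-(s * w)) = s / 2 / Complex.sin (s / 2) := by
  have hre : |(s / (2 * π)).re| < 1 := by
    rw [← Complex.ofReal_ofNat, ← Complex.ofReal_mul, Complex.div_ofReal_re, abs_div,
      abs_of_pos two_pi_pos, div_lt_one two_pi_pos]
    exact hs
  have h := integral_logisticDensity_smul_exp_eq_betaIntegral (s / (2 * π))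
  rw [betaIntegral_one_sub_one_add (div_ne_zero hs₀ (by simp)) hre] at h
  convert h using 3 with w <;> field_simp

lemma integral_logisticDensity_smul_exp_I {t : ℝ} (ht : t ≠ 0) :
    ∫ w : ℝ, logisticDensity w • Complex.exp (-(t * (Complex.I * w))) =
      t / 2 / Complex.sinh (t / 2) := by
  have h := integral_logisticDensity_smul_exp (s := t * Complex.I)
    (mul_ne_zero (mod_cast ht) Complex.I_ne_zero) (by simp [pi_pos])
  rw [mul_div_right_comm, Complex.sin_mul_I, mul_div_mul_right _ _ Complex.I_ne_zero] at h
  simpa only [mul_assoc] using h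

/-! ### The logarithmic mean -/

/-- The mean of `log (z + iW)` for `W` of density `logisticDensity`. -/
noncomputable def logisticLogMean (z : ℂ) : ℂ :=
  ∫ w : ℝ, logisticDensity w • Complex.log (z + Complex.I * w)

lemma re_add_I_mul_ofReal (z : ℂ) (w : ℝ) : (z + Complex.I * w).re = z.re := by simp

lemma norm_log_add_I_mul_sub_log_le {z : ℂ} (hz : 0 < z.re) (w : ℝ) :
    ‖Complex.log (z + Complex.I * w) - Complex.log z‖ ≤ |w| / z.re := by
  simpa using norm_log_sub_log_le hz le_rfl (re_add_I_mul_ofReal z w).ge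

lemma integrable_logisticDensity_smul_log {z : ℂ} (hz : 0 < z.re) :
    Integrable fun w : ℝ ↦ logisticDensity w • Complex.log (z + Complex.I * w) := by
  have hcont : Continuous fun w : ℝ ↦ Complex.log (z + Complex.I * w) :=
    Continuous.clog (by fun_prop) fun w ↦ .inl (by rwa [re_add_I_mul_ofReal])
  refine integrable_logisticDensity_smul (C := ‖Complex.log z‖ + 1 / z.re)
    hcont.aestronglyMeasurable fun w ↦ ?_
  calc ‖Complex.log (z + Complex.I * w)‖
    _ ≤ ‖Complex.log z‖ + |w| / z.re :=
        (norm_le_norm_add_norm_sub' _ _).trans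
          (add_le_add_right (norm_log_add_I_mul_sub_log_le hz w) _)
    _ ≤ ‖Complex.log z‖ * (1 + w ^ 2) + (1 + w ^ 2) / z.re := by
        gcongr
        · exact le_mul_of_one_le_right (norm_nonneg _) (le_add_of_nonneg_right (sq_nonneg w))
        · exact abs_le_one_add_sq w
    _ = (‖Complex.log z‖ + 1 / z.re) * (1 + w ^ 2) := by ring

lemma logisticLogMean_sub_log {z : ℂ} (hz : 0 < z.re) :
    logisticLogMean z - Complex.log z =
      ∫ w : ℝ, logisticDensity w • (Complex.log (z + Complex.I * w) - Complex.log z) := by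
  simp_rw [smul_sub]
  rw [integral_sub (integrable_logisticDensity_smul_log hz)
    (integrable_logisticDensity.smul_const _), integral_smul_const, integral_logisticDensity,
    one_smul, logisticLogMean]

lemma norm_logisticLogMean_sub_log_le {z : ℂ} (hz : 0 < z.re) :
    ‖logisticLogMean z - Complex.log z‖ ≤ (∫ w, logisticDensity w * |w|) / z.re := by
  rw [logisticLogMean_sub_log hz, ← integral_div]
  refine norm_integral_le_of_norm_le (integrable_logisticDensity_mul_abs.div_const _)
    (.of_forall fun w ↦ ?_)
  rw [norm_smul, Real.norm_of_nonneg (logisticDensity_nonneg w), mul_div_assoc]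
  exact mul_le_mul_of_nonneg_left (norm_log_add_I_mul_sub_log_le hz w) (logisticDensity_nonneg w)

lemma tendsto_logisticLogMean_sub_log :
    Tendsto (fun y : ℝ ↦ logisticLogMean y - Real.log y) atTop (𝓝 0) := by
  refine squeeze_zero_norm' ?_ (tendsto_id.const_div_atTop (∫ w, logisticDensity w * |w|))
  filter_upwards [eventually_gt_atTop 0] with y hy
  rw [Complex.ofReal_log hy.le]
  exact norm_logisticLogMean_sub_log_le (z := y) hy

/-! ### The difference equation -/

lemma integral_logisticDensity_smul_exp_sub_exp_div (z : ℂ) {t : ℝ} (ht : t ≠ 0) :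
    ∫ w : ℝ, logisticDensity w • ((Complex.exp (-(t * (z + Complex.I * w))) -
        Complex.exp (-(t * (z + 1 + Complex.I * w)))) / t) =
      Complex.exp (-(t * (z + 1 / 2))) := by
  have ht' : (t : ℂ) ≠ 0 := mod_cast ht
  have hsinh : Complex.sinh (t / 2) ≠ 0 := by
    rw [← Complex.ofReal_ofNat, ← Complex.ofReal_div, ← Complex.ofReal_sinh]
    exact_mod_cast Real.sinh_ne_zero.2 (div_ne_zero ht two_ne_zero)
  have hfactor (w : ℝ) : (Complex.exp (-(t * (z + Complex.I * w))) -
      Complex.exp (-(t * (z + 1 + Complex.I * w)))) / t =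
      Complex.exp (-(t * (Complex.I * w))) *
        (Complex.exp (-(t * (z + 1 / 2))) * (2 * Complex.sinh (t / 2) / t)) := by
    rw [Complex.sinh, mul_div_cancel₀ _ two_ne_zero, mul_div_assoc', mul_div_assoc', mul_sub,
      mul_sub]
    simp only [← Complex.exp_add]
    ring_nf
  simp_rw [hfactor, ← smul_mul_assoc]
  rw [integral_mul_const, integral_logisticDensity_smul_exp_I ht]
  field_simp

lemma integrable_logisticDensity_smul_exp_sub_exp_div {z : ℂ} (hz : 0 < z.re) :
    Integrable (fun p : ℝ × ℝ ↦ logisticDensity p.1 •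
        ((Complex.exp (-(p.2 * (z + Complex.I * p.1))) -
          Complex.exp (-(p.2 * (z + 1 + Complex.I * p.1)))) / p.2))
      (volume.prod (volume.restrict (Ioi 0))) := by
  have hdom : Integrable (fun p : ℝ × ℝ ↦ logisticDensity p.1 * Real.exp (-z.re * p.2))
      (volume.prod (volume.restrict (Ioi 0))) :=
    integrable_logisticDensity.mul_prod (integrableOn_exp_mul_Ioi (neg_neg_of_pos hz) 0)
  have hmeas := continuous_logisticDensity.measurable
  refine hdom.mono' (by fun_prop) ?_
  have hpos : ∀ᵐ p : ℝ × ℝ ∂(volume.prod (volume.restrict (Ioi 0))), 0 < p.2 :=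
    Measure.quasiMeasurePreserving_snd.ae (ae_restrict_mem measurableSet_Ioi)
  filter_upwards [hpos] with ⟨w, t⟩ ht
  have hexp := norm_exp_neg_mul_sub_exp_neg_mul_le (m := z.re) ht.le
    (z := z + Complex.I * w) (w := z + 1 + Complex.I * w) (by simp) (by simp)
  rw [norm_smul, Real.norm_of_nonneg (logisticDensity_nonneg w), norm_div, Complex.norm_real,
    Real.norm_of_nonneg ht.le]
  refine mul_le_mul_of_nonneg_left ((div_le_iff₀' ht).2 (hexp.trans_eq ?_))
    (logisticDensity_nonneg w)
  rw [add_sub_add_right_eq_sub, sub_add_cancel_left, norm_neg, norm_one, mul_one, neg_mul,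
    mul_comm z.re]

lemma logisticLogMean_add_one {z : ℂ} (hz : 0 < z.re) :
    logisticLogMean (z + 1) = logisticLogMean z + (z + 1 / 2)⁻¹ := by
  have hz' : 0 < (z + 1).re := by simpa using add_pos hz one_pos
  rw [← sub_eq_iff_eq_add']
  calc logisticLogMean (z + 1) - logisticLogMean z
    _ = ∫ w : ℝ, logisticDensity w •
          (Complex.log (z + 1 + Complex.I * w) - Complex.log (z + Complex.I * w)) := by
        simp_rw [smul_sub]
        exact (integral_sub (integrable_logisticDensity_smul_log hz')
          (integrable_logisticDensity_smul_log hz)).symm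
    _ = ∫ w : ℝ, ∫ t in Ioi (0 : ℝ), logisticDensity w •
          ((Complex.exp (-(t * (z + Complex.I * w))) -
            Complex.exp (-(t * (z + 1 + Complex.I * w)))) / t) := by
        refine integral_congr_ae (.of_forall fun w ↦ ?_)
        simp only [integral_smul]
        rw [integral_exp_neg_mul_sub_exp_neg_mul_div] <;> rwa [re_add_I_mul_ofReal]
    _ = ∫ t in Ioi (0 : ℝ), ∫ w : ℝ, logisticDensity w •
          ((Complex.exp (-(t * (z + Complex.I * w))) -
            Complex.exp (-(t * (z + 1 + Complex.I * w)))) / t) :=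
        integral_integral_swap (integrable_logisticDensity_smul_exp_sub_exp_div hz)
    _ = ∫ t in Ioi (0 : ℝ), Complex.exp (-(t * (z + 1 / 2))) :=
        setIntegral_congr_fun measurableSet_Ioi fun t ht ↦
          integral_logisticDensity_smul_exp_sub_exp_div z (mem_Ioi.1 ht).ne'
    _ = (z + 1 / 2)⁻¹ := integral_exp_neg_mul_Ioi (by simpa using add_pos hz one_half_pos)

lemma tendsto_logisticLogMean_sub_digamma :
    Tendsto (fun y : ℝ ↦ logisticLogMean y - Complex.digamma (y + 1 / 2)) atTop (𝓝 0) := by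
  have hshift : Tendsto (fun y : ℝ ↦ y + 1 / 2) atTop atTop :=
    tendsto_atTop_add_const_right _ _ tendsto_id
  have hdigamma : Tendsto (fun y : ℝ ↦ Complex.digamma (y + 1 / 2) - Real.log y) atTop (𝓝 0) := by
    have h := (tendsto_digamma_sub_log.comp hshift).add
      ((Complex.continuous_ofReal.tendsto' 0 0 Complex.ofReal_zero).comp
        (Real.tendsto_log_comp_add_sub_log (1 / 2)))
    simpa using h
  simpa using tendsto_logisticLogMean_sub_log.sub hdigamma

lemma logisticLogMean_ofReal {y : ℝ} (hy : 0 < y) :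
    logisticLogMean y = Complex.digamma (y + 1 / 2) := by
  refine sub_eq_zero.1 <| eq_of_tendsto_atTop_of_add_eq one_pos (fun x hx ↦ ?_)
    tendsto_logisticLogMean_sub_digamma hy
  have hx' (m : ℕ) : (x + 1 / 2 : ℂ) ≠ -m := by
    simpa using Complex.ofReal_injective.ne (ne_neg_natCast_of_pos (add_pos hx one_half_pos) m)
  have hmean := logisticLogMean_add_one (z := x) hx
  rw [Complex.ofReal_add, Complex.ofReal_one, hmean, add_right_comm,
    Complex.digamma_apply_add_one _ hx', add_sub_add_right_eq_sub]

/-- For `x > 1/2`, `(π/2) ∫_ℝ sech²(πw) log(x+iw-1/2) dw = ψ(x)`, where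
`ψ = (log Γ)'` is the digamma function (the imaginary parts cancel by symmetry). -/
theorem sech_log_moment (x : ℝ) (hx : 1 / 2 < x) :
    (π / 2 : ℂ) * ∫ w : ℝ,
        ((1 / Real.cosh (π * w)) ^ 2 : ℝ) • Complex.log ((x : ℂ) + Complex.I * w - 1 / 2) =
      ((deriv (fun y => Real.log (Real.Gamma y)) x : ℝ) : ℂ) := by
  calc (π / 2 : ℂ) * ∫ w : ℝ,
        ((1 / Real.cosh (π * w)) ^ 2 : ℝ) • Complex.log ((x : ℂ) + Complex.I * w - 1 / 2)
    _ = logisticLogMean ((x - 1 / 2 : ℝ) : ℂ) := by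
        rw [← integral_const_mul, logisticLogMean]
        refine integral_congr_ae (.of_forall fun w ↦ ?_)
        simp only [logisticDensity, Complex.real_smul]
        push_cast
        ring_nf
    _ = Complex.digamma x := by
        rw [logisticLogMean_ofReal (sub_pos.2 hx)]
        push_cast
        rw [sub_add_cancel]
    _ = (deriv (fun y => Real.log (Real.Gamma y)) x : ℝ) :=
        digamma_ofReal (ne_neg_natCast_of_pos (one_half_pos.trans hx))
end

section
/- For x > 1/2, (π/2) ∫_{-∞}^{∞} sech²(πw) (x + iw - 1/2)^{-1} dw = ∑_{k≥0} 1/(x+k)², i.e. the first negative moment of the shifted Bernoulli measure equals the Hurwitz zeta value ζ(2, x). -/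
/-!
The odd part of `(a + iw)⁻¹` integrates to zero against the even weight `sech² (πw)`, which leaves
the Poisson kernel `a / (a² + w²)` of the half-plane, where `a = x - 1/2`. Since
`π² sech² (πw) = ∑ₙ (n + 1/2 - iw)⁻²` over the integers, and the Poisson kernel evaluates
`(s - iw)⁻²`, for `s > 0`, as `π (s + a)⁻²`, each `n ≥ 0` contributes `π (x + n)⁻²`, and so does its
mirror image `-n - 1`. The Poisson evaluation is the mean value property on the unit disc,
transported by the Cayley transform `iw ↦ (a + iw) / (a - iw)`. Working with the Poisson kernel
rather than with `(a + iw)⁻¹` makes the interchange of sum and integral immediate: the kernel is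
integrable, and the `n`-th term is at most `(n + 1/2)⁻²`.
-/

open MeasureTheory Real

section CotangentSeries

lemma hasDerivAt_cot {z : ℂ} (hz : Complex.sin z ≠ 0) :
    HasDerivAt Complex.cot (-(1 / Complex.sin z ^ 2)) z := by
  refine ((Complex.hasDerivAt_cos z).div (Complex.hasDerivAt_sin z) hz).congr_deriv ?_
  rw [← neg_div, ← Complex.sin_sq_add_cos_sq z]
  ring

lemma pi_sq_div_sin_sq_eq_tsum_of_im_pos {z : ℂ} (hz : 0 < z.im) :
    π ^ 2 / Complex.sin (π * z) ^ 2 = ∑' n : ℤ, 1 / (z + n) ^ 2 := by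
  have hsin : Complex.sin (π * z) ≠ 0 :=
    sin_pi_mul_ne_zero (UpperHalfPlane.coe_mem_integerComplement ⟨z, hz⟩)
  have hderiv : HasDerivAt (fun u : ℂ ↦ π * Complex.cot (π * u))
      (-(π ^ 2 / Complex.sin (π * z) ^ 2)) z :=
    (((hasDerivAt_cot hsin).comp z (hasDerivAt_const_mul (π : ℂ))).const_mul (π : ℂ)).congr_deriv
      (by ring)
  have hseries := iteratedDerivWithin_cot_pi_mul_eq_mul_tsum_div_pow le_rfl hz
  rw [iteratedDerivWithin_one, hderiv.hasDerivWithinAt.derivWithin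
    (UpperHalfPlane.isOpen_upperHalfPlaneSet.uniqueDiffWithinAt hz)] at hseries
  simpa using hseries

lemma pi_sq_div_sin_sq_eq_tsum {z : ℂ} (hz : z.im ≠ 0) :
    π ^ 2 / Complex.sin (π * z) ^ 2 = ∑' n : ℤ, 1 / (z + n) ^ 2 := by
  obtain him | him := hz.lt_or_gt
  · have hneg : 0 < (-z).im := by simpa using him
    calc π ^ 2 / Complex.sin (π * z) ^ 2
        = π ^ 2 / Complex.sin (π * -z) ^ 2 := by rw [mul_neg, Complex.sin_neg, neg_sq]
      _ = ∑' n : ℤ, 1 / (-z + n) ^ 2 := pi_sq_div_sin_sq_eq_tsum_of_im_pos hneg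
      _ = ∑' n : ℤ, 1 / (-z + (-n : ℤ)) ^ 2 :=
        ((Equiv.neg ℤ).tsum_eq fun n : ℤ ↦ 1 / (-z + n) ^ 2).symm
      _ = ∑' n : ℤ, 1 / (z + n) ^ 2 := by
        refine tsum_congr fun n ↦ ?_
        rw [← neg_sq (z + n)]
        push_cast
        ring
  · exact pi_sq_div_sin_sq_eq_tsum_of_im_pos him

lemma pi_sq_mul_sech_sq_eq_tsum {w : ℝ} (hw : w ≠ 0) :
    (π : ℂ) ^ 2 * ((1 / cosh (π * w)) ^ 2 : ℝ) =
      ∑' n : ℤ, 1 / (((n + 1 / 2 : ℝ) : ℂ) - Complex.I * w) ^ 2 := by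
  have hsin : Complex.sin (π * (1 / 2 - Complex.I * w)) = cosh (π * w) := by
    rw [show (π : ℂ) * (1 / 2 - Complex.I * w) = π / 2 - (π * w : ℝ) * Complex.I by push_cast; ring,
      Complex.sin_pi_div_two_sub, Complex.cos_mul_I, Complex.ofReal_cosh]
  have hseries := pi_sq_div_sin_sq_eq_tsum (z := 1 / 2 - Complex.I * w) (by simpa using hw)
  rw [hsin] at hseries
  push_cast at hseries ⊢
  rw [one_div_pow, mul_one_div, hseries]
  exact tsum_congr fun n ↦ by ring

end CotangentSeries

section Sech

lemma one_add_sq_le_cosh_sq (t : ℝ) : 1 + t ^ 2 ≤ cosh t ^ 2 := by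
  have habs : |t| ≤ |sinh t| := by
    rw [abs_sinh]
    exact self_le_sinh_iff.2 (abs_nonneg t)
  rw [cosh_sq']
  gcongr 1 + ?_
  exact sq_le_sq.2 habs

lemma integrable_sech_sq : Integrable fun t : ℝ ↦ (1 / cosh t) ^ 2 := by
  refine integrable_inv_one_add_sq.mono'
    (Measurable.aestronglyMeasurable (by fun_prop)) (.of_forall fun t ↦ ?_)
  rw [Real.norm_of_nonneg (by positivity), one_div_pow, one_div]
  exact inv_anti₀ (by positivity) (one_add_sq_le_cosh_sq t)

end Sech

section EvenWeight

lemma inv_add_I_mul_re (a w : ℝ) :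
    ((a : ℂ) + Complex.I * w)⁻¹.re = a / (a ^ 2 + w ^ 2) := by
  simp [Complex.inv_re, Complex.normSq_apply, sq]

lemma norm_inv_add_I_mul_le {a : ℝ} (ha : a ≠ 0) (w : ℝ) :
    ‖((a : ℂ) + Complex.I * w)⁻¹‖ ≤ |a|⁻¹ := by
  rw [norm_inv]
  exact inv_anti₀ (abs_pos.2 ha) (by simpa using Complex.abs_re_le_norm (a + Complex.I * w))

lemma integral_eq_integral_re_of_conj_symm {f : ℝ → ℂ} (hf : Integrable f)
    (hsymm : ∀ w, f (-w) = starRingEnd ℂ (f w)) : ∫ w, f w = ((∫ w, (f w).re : ℝ) : ℂ) := by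
  have hconj : starRingEnd ℂ (∫ w, f w) = ∫ w, f w := by
    rw [← integral_conj, ← integral_neg_eq_self f]
    exact integral_congr_ae (.of_forall fun w ↦ (hsymm w).symm)
  have hre : ∫ w, (f w).re = (∫ w, f w).re := integral_re hf
  rw [hre, Complex.conj_eq_iff_re.1 hconj]

lemma integral_smul_inv_add_I_mul_of_even {a : ℝ} (ha : a ≠ 0) {g : ℝ → ℝ} (hg : Integrable g)
    (heven : g.Even) :
    ∫ w, g w • ((a : ℂ) + Complex.I * w)⁻¹ = ((∫ w, a / (a ^ 2 + w ^ 2) * g w : ℝ) : ℂ) := by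
  have hint : Integrable fun w : ℝ ↦ g w • ((a : ℂ) + Complex.I * w)⁻¹ :=
    hg.smul_bdd |a|⁻¹ (Measurable.aestronglyMeasurable (by fun_prop))
      (.of_forall (norm_inv_add_I_mul_le ha))
  rw [integral_eq_integral_re_of_conj_symm hint fun w ↦ by simp [heven w]]
  simp only [Complex.smul_re, inv_add_I_mul_re, smul_eq_mul, mul_comm]

end EvenWeight

section Poisson

variable {E : Type*} [NormedAddCommGroup E] [NormedSpace ℝ E]

lemma circleMap_two_mul_arctan (x : ℝ) :
    circleMap 0 1 (2 * arctan x) = (1 + x * Complex.I) / (1 - x * Complex.I) := by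
  have hnum : 1 + x * Complex.I ≠ 0 := fun h ↦ by simpa using congrArg Complex.re h
  have hden : 1 - x * Complex.I ≠ 0 := fun h ↦ by simpa using congrArg Complex.re h
  rw [circleMap_zero, Complex.ofReal_one, one_mul, Complex.ofReal_mul, Complex.ofReal_arctan,
    Complex.arctan]
  nth_rw 2 [← Complex.exp_log (div_ne_zero hnum hden)]
  congr 1
  push_cast
  linear_combination (-Complex.log ((1 + x * Complex.I) / (1 - x * Complex.I))) * Complex.I_sq

lemma circleAverage_eq_integral_Ioo (f : ℂ → E) (c : ℂ) (R : ℝ) :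
    circleAverage f c R = (2 * π)⁻¹ • ∫ θ in Set.Ioo (-π) π, f (circleMap c R θ) := by
  rw [circleAverage_eq_integral_add (-π),
    intervalIntegral.integral_comp_add_right (fun θ ↦ f (circleMap c R θ)),
    intervalIntegral.integral_of_le (by linarith [pi_pos]), integral_Ioc_eq_integral_Ioo]
  ring_nf

lemma hasDerivAt_two_mul_arctan_div {a : ℝ} (ha : a ≠ 0) (w : ℝ) :
    HasDerivAt (fun w ↦ 2 * arctan (w / a)) (2 * (a / (a ^ 2 + w ^ 2))) w := by
  refine (((hasDerivAt_id w).div_const a).arctan.const_mul 2).congr_deriv ?_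
  simp only [id]
  have : a ^ 2 + w ^ 2 ≠ 0 := by positivity
  field_simp

lemma range_two_mul_arctan_div {a : ℝ} (ha : a ≠ 0) :
    Set.range (fun w ↦ 2 * arctan (w / a)) = Set.Ioo (-π) π := by
  have hdiv : Function.Surjective fun w : ℝ ↦ w / a := fun y ↦ ⟨y * a, by field_simp⟩
  calc Set.range (fun w ↦ 2 * arctan (w / a))
      = (2 * ·) '' Set.range arctan := by
        rw [← hdiv.range_comp arctan, ← Set.range_comp]; rfl
    _ = Set.Ioo (-π) π := by
        rw [range_arctan, Set.image_mul_left_Ioo two_pos]; ring_nf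

lemma integral_poisson_smul_comp_cayley {a : ℝ} (ha : 0 < a) (f : ℂ → E) :
    ∫ w : ℝ, (a / (a ^ 2 + w ^ 2)) • f ((a + Complex.I * w) / (a - Complex.I * w)) =
      π • circleAverage f 0 1 := by
  have hinj : Function.Injective fun w ↦ 2 * arctan (w / a) := fun v w h ↦ by
    simpa [ha.ne'] using h
  have hcayley (w : ℝ) : circleMap 0 1 (2 * arctan (w / a)) =
      (a + Complex.I * w) / (a - Complex.I * w) := by
    have ha' : (a : ℂ) ≠ 0 := by exact_mod_cast ha.ne'
    rw [circleMap_two_mul_arctan, ← mul_div_mul_left _ _ ha']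
    push_cast
    congr 1 <;> field_simp
  rw [circleAverage_eq_integral_Ioo, ← range_two_mul_arctan_div ha.ne', ← Set.image_univ,
    integral_image_eq_integral_abs_deriv_smul .univ
      (fun w _ ↦ (hasDerivAt_two_mul_arctan_div ha.ne' w).hasDerivWithinAt) hinj.injOn,
    setIntegral_univ, smul_smul, ← integral_smul]
  refine integral_congr_ae (.of_forall fun w ↦ ?_)
  have : 0 < a / (a ^ 2 + w ^ 2) := by positivity
  simp only [hcayley, smul_smul]
  rw [abs_of_pos (by positivity)]
  congr 1
  field_simp

lemma norm_sub_lt_norm_add {s : ℂ} (hs : 0 < s.re) {a : ℝ} (ha : 0 < a) : ‖s - a‖ < ‖s + a‖ := by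
  rw [← sq_lt_sq₀ (norm_nonneg _) (norm_nonneg _), ← Complex.normSq_eq_norm_sq,
    ← Complex.normSq_eq_norm_sq, Complex.normSq_apply, Complex.normSq_apply]
  simp only [Complex.sub_re, Complex.add_re, Complex.sub_im, Complex.add_im, Complex.ofReal_re,
    Complex.ofReal_im, sub_zero, add_zero]
  nlinarith [mul_pos hs ha]

lemma sub_I_mul_ne_zero {s : ℂ} (hs : s.re ≠ 0) (w : ℝ) : s - Complex.I * w ≠ 0 :=
  fun h ↦ hs (by simpa using congrArg Complex.re h)

lemma div_comp_cayley_eq_one_div_sub_I_mul {a : ℝ} (ha : a ≠ 0) {s : ℂ} (hs : s.re ≠ 0) (w : ℝ) :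
    ((a + Complex.I * w) / (a - Complex.I * w) + 1) /
        (s + a + (s - a) * ((a + Complex.I * w) / (a - Complex.I * w))) =
      1 / (s - Complex.I * w) := by
  have ha' : (a : ℂ) ≠ 0 := by exact_mod_cast ha
  have haw : (a : ℂ) - Complex.I * w ≠ 0 := sub_I_mul_ne_zero (by simpa using ha) w
  have hsw : s - Complex.I * w ≠ 0 := sub_I_mul_ne_zero hs w
  have hnum : (a + Complex.I * w) / (a - Complex.I * w) + 1 = 2 * a / (a - Complex.I * w) := by
    field_simp
    ring
  have hden : s + a + (s - a) * ((a + Complex.I * w) / (a - Complex.I * w)) =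
      2 * a * (s - Complex.I * w) / (a - Complex.I * w) := by
    field_simp
    ring
  rw [hnum, hden]
  field_simp

lemma integral_poisson_smul_one_div_sub_I_mul_pow {a : ℝ} (ha : 0 < a) {s : ℂ} (hs : 0 < s.re)
    (n : ℕ) :
    ∫ w : ℝ, (a / (a ^ 2 + w ^ 2)) • (1 / (s - Complex.I * w) ^ n) = π / (s + a) ^ n := by
  let f : ℂ → ℂ := fun u ↦ ((u + 1) / (s + a + (s - a) * u)) ^ n
  have hden {u : ℂ} (hu : u ∈ Metric.closedBall 0 1) : s + a + (s - a) * u ≠ 0 := fun h ↦ by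
    refine (norm_sub_lt_norm_add hs ha).not_ge ?_
    rw [eq_neg_of_add_eq_zero_left h, norm_neg, norm_mul]
    exact mul_le_of_le_one_right (norm_nonneg _) (mem_closedBall_zero_iff.1 hu)
  have hdiff : DifferentiableOn ℂ f (Metric.closedBall 0 1) :=
    ((differentiableOn_id.add_const 1).div
      ((differentiableOn_id.const_mul (s - a)).const_add (s + a)) fun _ hu ↦ hden hu).pow n
  have hmean : circleAverage f 0 1 = f 0 :=
    DiffContOnCl.circleAverage (DifferentiableOn.diffContOnCl <| by
      rwa [abs_one, closure_ball _ one_ne_zero])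
  have hcayley (w : ℝ) : f ((a + Complex.I * w) / (a - Complex.I * w)) =
      1 / (s - Complex.I * w) ^ n := by
    simp only [f, div_comp_cayley_eq_one_div_sub_I_mul ha.ne' hs.ne', one_div_pow]
  calc ∫ w : ℝ, (a / (a ^ 2 + w ^ 2)) • (1 / (s - Complex.I * w) ^ n)
      = π • circleAverage f 0 1 := by
        simp only [← integral_poisson_smul_comp_cayley ha, hcayley]
    _ = π / (s + a) ^ n := by rw [hmean]; simp [f, div_eq_mul_inv]

lemma integral_poisson_smul_one_div_sub_I_mul_sq {a s : ℝ} (ha : 0 < a) (hs : s ≠ 0) :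
    ∫ w : ℝ, (a / (a ^ 2 + w ^ 2)) • (1 / ((s : ℂ) - Complex.I * w) ^ 2) =
      ((π / (|s| + a) ^ 2 : ℝ) : ℂ) := by
  have habs : ∫ w : ℝ, (a / (a ^ 2 + w ^ 2)) • (1 / (((|s| : ℝ) : ℂ) - Complex.I * w) ^ 2) =
      ((π / (|s| + a) ^ 2 : ℝ) : ℂ) := by
    rw [integral_poisson_smul_one_div_sub_I_mul_pow ha (by simpa using hs)]
    push_cast
    rfl
  obtain hneg | hpos := hs.lt_or_gt
  · rw [← habs, ← integral_neg_eq_self]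
    refine integral_congr_ae (.of_forall fun w ↦ ?_)
    have hflip : (s : ℂ) - Complex.I * (-w : ℝ) = -(((|s| : ℝ) : ℂ) - Complex.I * w) := by
      rw [abs_of_neg hneg]
      push_cast
      ring
    simp only [hflip, neg_sq]
  · rwa [abs_of_pos hpos] at habs ⊢

lemma integrable_poisson {a : ℝ} (ha : a ≠ 0) : Integrable fun w : ℝ ↦ a / (a ^ 2 + w ^ 2) := by
  refine ((integrable_inv_one_add_sq.comp_div ha).const_mul a⁻¹).congr (.of_forall fun w ↦ ?_)
  have : a ^ 2 + w ^ 2 ≠ 0 := by positivity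
  field_simp

end Poisson

section TermwiseIntegration

lemma hasSum_integral_smul_of_norm_le {α ι E : Type*} [MeasurableSpace α] {μ : Measure α}
    [Countable ι] [NormedAddCommGroup E] [NormedSpace ℝ E] [CompleteSpace E] {g : α → ℝ}
    {f : ι → α → E} {b : ι → ℝ} (hg : Integrable g μ)
    (hf : ∀ i, AEStronglyMeasurable (f i) μ) (hb : Summable b) (hfb : ∀ i x, ‖f i x‖ ≤ b i) :
    HasSum (fun i ↦ ∫ x, g x • f i x ∂μ) (∫ x, g x • ∑' i, f i x ∂μ) := by
  refine hasSum_integral_of_dominated_convergence (fun i x ↦ b i * |g x|)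
    (fun i ↦ hg.aestronglyMeasurable.smul (hf i)) (fun i ↦ .of_forall fun x ↦ ?_)
    (.of_forall fun x ↦ hb.mul_right _) ?_ (.of_forall fun x ↦ ?_)
  · rw [norm_smul, mul_comm, Real.norm_eq_abs]
    gcongr
    exact hfb i x
  · simpa only [tsum_mul_right] using hg.abs.const_mul (∑' i, b i)
  · exact (hb.of_norm_bounded (hfb · x)).hasSum.const_smul (g x)

lemma add_half_ne_zero (n : ℤ) : (n + 1 / 2 : ℝ) ≠ 0 := fun h ↦ by
  have : (2 * n + 1 : ℝ) = 0 := by linarith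
  norm_cast at this
  lia

lemma hasSum_integral_poisson_mul_sech_sq {a : ℝ} (ha : 0 < a) :
    HasSum (fun n : ℤ ↦ π / (|(n + 1 / 2 : ℝ)| + a) ^ 2)
      (π ^ 2 * ∫ w, a / (a ^ 2 + w ^ 2) * (1 / cosh (π * w)) ^ 2) := by
  have hsummable : Summable fun n : ℤ ↦ 1 / |(n + 1 / 2 : ℝ)| ^ 2 := by
    simpa using (summable_one_div_int_add_rpow (1 / 2) 2).2 one_lt_two
  have hbound (n : ℤ) (w : ℝ) :
      ‖1 / (((n + 1 / 2 : ℝ) : ℂ) - Complex.I * w) ^ 2‖ ≤ 1 / |(n + 1 / 2 : ℝ)| ^ 2 := by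
    rw [norm_div, norm_one, norm_pow]
    have habs : 0 < |(n + 1 / 2 : ℝ)| := abs_pos.2 (add_half_ne_zero n)
    gcongr
    simpa using Complex.abs_re_le_norm (((n + 1 / 2 : ℝ) : ℂ) - Complex.I * w)
  have hseries : ∫ w : ℝ, (a / (a ^ 2 + w ^ 2)) •
      ∑' n : ℤ, 1 / (((n + 1 / 2 : ℝ) : ℂ) - Complex.I * w) ^ 2 =
        ((π ^ 2 * ∫ w, a / (a ^ 2 + w ^ 2) * (1 / cosh (π * w)) ^ 2 : ℝ) : ℂ) := by
    rw [← integral_const_mul, ← integral_complex_ofReal]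
    refine integral_congr_ae ?_
    filter_upwards [Measure.ae_ne volume (0 : ℝ)] with w hw
    rw [← pi_sq_mul_sech_sq_eq_tsum hw, Complex.real_smul]
    push_cast
    ring
  rw [← Complex.hasSum_ofReal, ← hseries]
  simp only [← integral_poisson_smul_one_div_sub_I_mul_sq ha (add_half_ne_zero _)]
  exact hasSum_integral_smul_of_norm_le (integrable_poisson ha.ne')
    (fun n ↦ Measurable.aestronglyMeasurable (by fun_prop)) hsummable hbound

lemma hasSum_one_div_add_sq_integral_poisson_mul_sech_sq {a : ℝ} (ha : 0 < a) :
    HasSum (fun k : ℕ ↦ 1 / (a + 1 / 2 + k) ^ 2)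
      (π / 2 * ∫ w, a / (a ^ 2 + w ^ 2) * (1 / cosh (π * w)) ^ 2) := by
  have hfold := (hasSum_integral_poisson_mul_sech_sq ha).nat_add_neg_add_one.mul_left (1 / (2 * π))
  have hterm (k : ℕ) : 1 / (2 * π) * (π / (|((k : ℤ) + 1 / 2 : ℝ)| + a) ^ 2 +
      π / (|((-((k : ℤ) + 1) : ℤ) + 1 / 2 : ℝ)| + a) ^ 2) = 1 / (a + 1 / 2 + k) ^ 2 := by
    have hnonneg : |((k : ℤ) + 1 / 2 : ℝ)| = k + 1 / 2 := by
      rw [Int.cast_natCast, abs_of_nonneg (by positivity)]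
    have hneg : |((-((k : ℤ) + 1) : ℤ) + 1 / 2 : ℝ)| = k + 1 / 2 := by
      rw [← abs_neg, ← hnonneg]
      push_cast
      ring_nf
    rw [hnonneg, hneg, show a + 1 / 2 + k = k + 1 / 2 + a by ring]
    field_simp
    norm_num
  have hscale (I : ℝ) : 1 / (2 * π) * (π ^ 2 * I) = π / 2 * I := by
    field_simp
  simpa only [hterm, hscale] using hfold

end TermwiseIntegration

/-- For `x > 1/2`,
`(π/2) ∫_ℝ sech²(πw) (x+iw-1/2)⁻¹ dw = ∑_{k≥0} 1/(x+k)² = ζ(2,x)`. -/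
theorem sech_first_negative_moment (x : ℝ) (hx : 1 / 2 < x) :
    (π / 2 : ℂ) * ∫ w : ℝ,
        ((1 / Real.cosh (π * w)) ^ 2 : ℝ) • (((x : ℂ) + Complex.I * w - 1 / 2)⁻¹) =
      ((∑' k : ℕ, 1 / (x + k) ^ 2 : ℝ) : ℂ) := by
  obtain ⟨a, ha, rfl⟩ : ∃ a, 0 < a ∧ x = a + 1 / 2 := ⟨x - 1 / 2, by linarith, by ring⟩
  have hshift (w : ℝ) : ((a + 1 / 2 : ℝ) : ℂ) + Complex.I * w - 1 / 2 = a + Complex.I * w := by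
    push_cast
    ring
  have heven : Function.Even fun w ↦ (1 / cosh (π * w)) ^ 2 := fun w ↦ by
    simp only [mul_neg, cosh_neg]
  simp only [hshift]
  rw [integral_smul_inv_add_I_mul_of_even ha.ne' (integrable_sech_sq.comp_mul_left' pi_ne_zero)
      heven, (hasSum_one_div_add_sq_integral_poisson_mul_sech_sq ha).tsum_eq]
  push_cast
  rfl
end
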